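/- Every finite family of pairwise non-overlapping closed discs in the plane ℝ² with positive radii admits a proper colouring with six colours, i.e. a colouring with 6 colours such that any two touching discs receive different colours (the 'six colours theorem' for discs). -/

import Mathlib

/-!
Among the discs of smallest radius `r` of a finite family take one whose centre is farthest from
some fixed point. By the law of cosines, two discs touching it are seen from its centre at an angle
of at least `π / 3`, with equality only if both have radius `r`. Six neighbours would thus have to
be equally spaced around it, and two of them would be discs of radius `r` whose centres have the
chosen centre strictly between them; one of those centres is farther from the fixed point. So the
contact graph is 5-degenerate, and greedy colouring together with the De Bruijn–Erdős theorem
colours it with six colours.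
-/

open Finset Module Real

section Degenerate

variable {V : Type*} {G : SimpleGraph V} {k : ℕ}

open Classical in
/-- `k`-degenerate graphs: every nonempty finite set of vertices contains a vertex with at most `k`
neighbours in the set. Only finite sets are tested, so that the notion is also of use for infinite
graphs. -/
def IsDegenerate (G : SimpleGraph V) (k : ℕ) : Prop :=
  ∀ A : Finset V, A.Nonempty → ∃ v ∈ A, #{w ∈ A | G.Adj v w} ≤ k

namespace IsDegenerate

theorem exists_coloring_on_finset (hG : IsDegenerate G k) (A : Finset V) :
    ∃ f : V → Fin (k + 1), ∀ v ∈ A, ∀ w ∈ A, G.Adj v w → f v ≠ f w := by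
  classical
  induction A using Finset.strongInduction with
  | H A ih =>
    rcases A.eq_empty_or_nonempty with rfl | hA
    · exact ⟨fun _ => 0, by simp⟩
    obtain ⟨v, hv, hcard⟩ := hG A hA
    obtain ⟨f, hf⟩ := ih _ (erase_ssubset hv)
    obtain ⟨x, -, hx⟩ : ∃ x ∈ univ, x ∉ image f {w ∈ A | G.Adj v w} :=
      exists_mem_notMem_of_card_lt_card <| by
        simpa using card_image_le.trans_lt (Nat.lt_succ_of_le hcard)
    have hfx {w : V} (hw : w ∈ A) (hvw : G.Adj v w) : f w ≠ x := fun h =>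
      hx (mem_image.2 ⟨w, mem_filter.2 ⟨hw, hvw⟩, h⟩)
    refine ⟨Function.update f v x, fun u hu w hw huw => ?_⟩
    rcases eq_or_ne u v with rfl | huv
    · simpa [huw.ne'] using (hfx hw huw).symm
    rcases eq_or_ne w v with rfl | hwv
    · simpa [huv] using hfx hu huw.symm
    · simpa [huv, hwv] using hf u (mem_erase.2 ⟨huv, hu⟩) w (mem_erase.2 ⟨hwv, hw⟩) huw

theorem colorable (hG : IsDegenerate G k) : G.Colorable (k + 1) := by
  choose f hf using hG.exists_coloring_on_finset
  exact SimpleGraph.nonempty_hom_of_forall_finite_subgraph_hom fun H hH =>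
    SimpleGraph.Coloring.mk (fun v => f hH.toFinset v) fun {v w} hvw =>
      hf _ v (hH.mem_toFinset.2 v.2) w (hH.mem_toFinset.2 w.2) (H.adj_sub hvw)

end IsDegenerate

end Degenerate

theorem eq_add_nsmul_of_add_le_succ {M : Type*} [AddCommGroup M] [PartialOrder M]
    [IsOrderedAddMonoid M] {n : ℕ} {f : Fin (n + 1) → M} {δ : M}
    (hstep : ∀ i : Fin n, f i.castSucc + δ ≤ f i.succ) (hlast : f (Fin.last n) ≤ f 0 + n • δ)
    (i : Fin (n + 1)) : f i = f 0 + (i : ℕ) • δ := by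
  have hmono : Monotone fun j : Fin (n + 1) => f j - (j : ℕ) • δ := by
    refine Fin.monotone_iff_le_succ.2 fun j => ?_
    simpa [succ_nsmul', sub_le_sub_iff_right, ← sub_sub, le_sub_iff_add_le] using hstep j
  have hlast' : f (Fin.last n) - n • δ ≤ f 0 := sub_le_iff_le_add.2 hlast
  have hle : f i - (i : ℕ) • δ ≤ f 0 := by
    refine le_trans ?_ hlast'
    simpa using hmono (Fin.le_last i)
  have hge : f 0 ≤ f i - (i : ℕ) • δ := by simpa using hmono (Fin.zero_le i)
  exact sub_eq_iff_eq_add.1 (hle.antisymm hge)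

section PlanarAngles

open InnerProductGeometry

theorem cos_angle_eq_cos_arg_sub_arg {v w : ℂ} (hv : v ≠ 0) (hw : w ≠ 0) :
    cos (angle v w) = cos (v.arg - w.arg) := by
  rw [Complex.angle_eq_abs_arg hv hw, cos_abs, ← Angle.cos_coe, Complex.arg_div_coe_angle hv hw,
    ← Angle.coe_sub, Angle.cos_coe]

theorem abs_arg_sub_arg_mem_Icc {v w : ℂ} (hv : v ≠ 0) (hw : w ≠ 0) :
    |v.arg - w.arg| ∈ Set.Icc (angle v w) (2 * π - angle v w) := by
  set d := |v.arg - w.arg|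
  have hd : d ≤ 2 * π := abs_sub_le_iff.2
    ⟨by linarith [v.arg_le_pi, w.neg_pi_lt_arg], by linarith [w.arg_le_pi, v.neg_pi_lt_arg]⟩
  have hangle : angle v w ∈ Set.Icc 0 π := ⟨angle_nonneg v w, angle_le_pi v w⟩
  have hcos : cos (angle v w) = cos d := by rw [cos_abs, cos_angle_eq_cos_arg_sub_arg hv hw]
  rcases le_total d π with hπ | hπ
  · have h : angle v w = d := injOn_cos hangle ⟨abs_nonneg _, hπ⟩ hcos
    constructor <;> linarith
  · have h : angle v w = 2 * π - d :=
      injOn_cos hangle ⟨by linarith, by linarith⟩ (by rw [hcos, cos_two_pi_sub])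
    constructor <;> linarith

variable {n : ℕ}

theorem exists_perm_arg_eq_add {w : Fin (n + 1) → ℂ} (hw : ∀ i, w i ≠ 0)
    (hangle : Pairwise fun i j => 2 * π / (n + 1) ≤ angle (w i) (w j)) :
    ∃ σ : Equiv.Perm (Fin (n + 1)), ∀ i,
      (w (σ i)).arg = (w (σ 0)).arg + (i : ℕ) • (2 * π / (n + 1)) := by
  let σ := Tuple.sort fun i => (w i).arg
  have hmono : Monotone fun i => (w (σ i)).arg := Tuple.monotone_sort fun i => (w i).arg
  have hmem {i j : Fin (n + 1)} (hij : i < j) : (w (σ j)).arg - (w (σ i)).arg ∈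
      Set.Icc (2 * π / (n + 1)) (2 * π - 2 * π / (n + 1)) := by
    have h := abs_arg_sub_arg_mem_Icc (hw (σ j)) (hw (σ i))
    have hsep := hangle (σ.injective.ne hij.ne')
    rw [abs_of_nonneg (sub_nonneg.2 (hmono hij.le))] at h
    exact ⟨hsep.trans h.1, h.2.trans (by linarith)⟩
  -- The last direction is followed by the first one around the circle, which bounds the sum of the
  -- steps between them by `n` times the smallest possible step.
  refine ⟨σ, eq_add_nsmul_of_add_le_succ (f := fun i => (w (σ i)).arg) (fun i => ?_) ?_⟩
  · linarith [(hmem i.castSucc_lt_succ).1]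
  · rcases n.eq_zero_or_pos with rfl | hn
    · simp
    · have hsum : n • (2 * π / (n + 1)) = 2 * π - 2 * π / (n + 1) := by
        rw [nsmul_eq_mul]
        field_simp
        ring
      have hlast : (0 : Fin (n + 1)) < Fin.last n := by simpa [Fin.lt_def] using hn
      linarith [(hmem hlast).2]

theorem exists_perm_cos_angle_eq {V : Type*} [NormedAddCommGroup V] [InnerProductSpace ℝ V]
    (hV : finrank ℝ V = 2) {w : Fin (n + 1) → V} (hw : ∀ i, w i ≠ 0)
    (hangle : Pairwise fun i j => 2 * π / (n + 1) ≤ angle (w i) (w j)) :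
    ∃ σ : Equiv.Perm (Fin (n + 1)), ∀ i j,
      cos (angle (w (σ i)) (w (σ j))) = cos ((i - j : ℝ) * (2 * π / (n + 1))) := by
  have : FiniteDimensional ℝ V := .of_finrank_eq_succ hV
  let φ := (Complex.isometryOfOrthonormal
    ((stdOrthonormalBasis ℝ V).reindex (finCongr hV))).symm
  have hφ (v v' : V) : angle (φ v) (φ v') = angle v v' := φ.toLinearIsometry.angle_map v v'
  have hφw (i) : φ (w i) ≠ 0 := by simpa using hw i
  obtain ⟨σ, hσ⟩ := exists_perm_arg_eq_add hφw (by simpa only [hφ] using hangle)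
  refine ⟨σ, fun i j => ?_⟩
  rw [← hφ, cos_angle_eq_cos_arg_sub_arg (hφw _) (hφw _), hσ i, hσ j, nsmul_eq_mul, nsmul_eq_mul]
  ring_nf

end PlanarAngles

/-- The contact graph of the discs with centres `c i` and radii `r i`: two discs are adjacent if
they touch. The condition `i ≠ j` makes a difference only for discs of radius `0`. -/
def contactGraph {ι P : Type*} [PseudoMetricSpace P] (c : ι → P) (r : ι → ℝ) :
    SimpleGraph ι where
  Adj i j := i ≠ j ∧ dist (c i) (c j) = r i + r j
  symm := ⟨fun _ _ h => ⟨h.1.symm, by rw [dist_comm, h.2, add_comm]⟩⟩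
  loopless := ⟨fun _ h => h.1 rfl⟩

section Discs

open EuclideanGeometry

variable {V P : Type*} [NormedAddCommGroup V] [InnerProductSpace ℝ V] [MetricSpace P]
  [NormedAddTorsor V P]

section TwoNeighbours

variable {p a b : P} {r s t : ℝ}

theorem eq_and_eq_of_angle_le_pi_div_three (hr : 0 < r) (hs : r ≤ s) (ht : r ≤ t)
    (ha : dist a p = r + s) (hb : dist b p = r + t) (hab : s + t ≤ dist a b)
    (hangle : ∠ a p b ≤ π / 3) : s = r ∧ t = r := by
  have hcos : 1 / 2 ≤ cos (∠ a p b) := cos_pi_div_three ▸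
    cos_le_cos_of_nonneg_of_le_pi (angle_nonneg _ _ _) (by linarith [pi_pos]) hangle
  have hlaw := law_cos a p b
  rw [ha, hb] at hlaw
  have hprod : (r + s) * (r + t) ≤ 2 * ((r + s) * (r + t)) * cos (∠ a p b) := by
    nlinarith [mul_pos (by linarith : 0 < r + s) (by linarith : 0 < r + t)]
  have hsq : (s + t) ^ 2 ≤ dist a b ^ 2 := pow_le_pow_left₀ (by linarith) hab 2
  have hexcess : 2 * (r * (s - r)) + 2 * (r * (t - r)) + 3 * ((s - r) * (t - r)) ≤ 0 := by linarith
  have hs' := mul_nonneg hr.le (sub_nonneg.2 hs)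
  have ht' := mul_nonneg hr.le (sub_nonneg.2 ht)
  have hst := mul_nonneg (sub_nonneg.2 hs) (sub_nonneg.2 ht)
  have hsr : r * (s - r) ≤ 0 := by linarith only [hexcess, ht', hst]
  have htr : r * (t - r) ≤ 0 := by linarith only [hexcess, hs', hst]
  exact ⟨(sub_nonpos.1 (nonpos_of_mul_nonpos_right hsr hr)).antisymm hs,
    (sub_nonpos.1 (nonpos_of_mul_nonpos_right htr hr)).antisymm ht⟩

theorem pi_div_three_le_angle (hr : 0 < r) (hs : r ≤ s) (ht : r ≤ t)
    (ha : dist a p = r + s) (hb : dist b p = r + t) (hab : s + t ≤ dist a b) :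
    π / 3 ≤ ∠ a p b := by
  by_contra! hlt
  obtain ⟨rfl, rfl⟩ := eq_and_eq_of_angle_le_pi_div_three hr hs ht ha hb hab hlt.le
  have hcos : 1 / 2 < cos (∠ a p b) := cos_pi_div_three ▸
    cos_lt_cos_of_nonneg_of_le_pi (angle_nonneg _ _ _) (by linarith [pi_pos]) hlt
  have hlaw := law_cos a p b
  rw [ha, hb] at hlaw
  nlinarith [mul_pos hr hr]

end TwoNeighbours

theorem exists_sbtw_of_six_touching (hV : finrank ℝ V = 2) {p : P} {r : ℝ} {q : Fin 6 → P}
    {s : Fin 6 → ℝ} (hr : 0 < r) (hs : ∀ i, r ≤ s i) (hq : ∀ i, dist (q i) p = r + s i)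
    (hsep : Pairwise fun i j => s i + s j ≤ dist (q i) (q j)) :
    ∃ i j, s i = r ∧ s j = r ∧ Sbtw ℝ (q i) p (q j) := by
  have hne (i) : q i -ᵥ p ≠ 0 :=
    vsub_ne_zero.2 (dist_pos.1 (by linarith [hq i, hs i]))
  have hθ : 2 * π / ((5 : ℕ) + 1) = π / 3 := by push_cast; ring
  obtain ⟨σ, hσ⟩ := exists_perm_cos_angle_eq hV hne fun i j hij =>
    hθ.trans_le (pi_div_three_le_angle hr (hs i) (hs j) (hq i) (hq j) (hsep hij))
  rw [hθ] at hσ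
  have hangle {i j : Fin 6} {x : ℝ} (hx : x ∈ Set.Icc 0 π)
      (h : (i - j : ℝ) * (π / 3) = x) : ∠ (q (σ i)) p (q (σ j)) = x :=
    injOn_cos ⟨angle_nonneg _ _ _, angle_le_pi _ _ _⟩ hx (h ▸ hσ i j)
  have hrad {i j : Fin 6} (h : (i - j : ℝ) = 1) : s (σ i) = r := by
    have hij : i ≠ j := by
      rintro rfl
      simp at h
    have hπ : ∠ (q (σ i)) p (q (σ j)) = π / 3 :=
      hangle ⟨by positivity, by linarith [pi_pos]⟩ (by rw [h, one_mul])
    exact (eq_and_eq_of_angle_le_pi_div_three hr (hs _) (hs _) (hq _) (hq _)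
      (hsep (σ.injective.ne hij)) hπ.le).1
  have h_radius_four : s (σ 4) = r := hrad (j := 3) (by norm_num)
  have h_radius_one : s (σ 1) = r := hrad (j := 0) (by norm_num)
  have h_opposite : ∠ (q (σ 4)) p (q (σ 1)) = π :=
    hangle ⟨pi_pos.le, le_rfl⟩ (by norm_num; ring)
  exact ⟨σ 4, σ 1, h_radius_four, h_radius_one, angle_eq_pi_iff_sbtw.1 h_opposite⟩

variable {ι : Type*} {c : ι → P} {r : ι → ℝ}

theorem contactGraph_isDegenerate (hV : finrank ℝ V = 2) (hr : ∀ i, 0 < r i)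
    (hsep : Pairwise fun i j => r i + r j ≤ dist (c i) (c j)) :
    IsDegenerate (contactGraph c r) 5 := by
  classical
  intro A hA
  obtain ⟨m, hm, hmin⟩ := A.exists_min_image r hA
  obtain ⟨i, hi, hfar⟩ := exists_max_image {j ∈ A | r j = r m} (fun j => dist (c j) (c m))
    ⟨m, by simp [hm]⟩
  obtain ⟨hiA, him⟩ := mem_filter.1 hi
  refine ⟨i, hiA, ?_⟩
  by_contra! hcard
  obtain ⟨e⟩ : Nonempty (Fin 6 ↪ {j ∈ A | (contactGraph c r).Adj i j}) :=
    Function.Embedding.nonempty_of_card_le (by simpa using Nat.succ_le_of_lt hcard)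
  have he (k : Fin 6) : (e k : ι) ∈ A ∧ (contactGraph c r).Adj i (e k) := mem_filter.1 (e k).2
  obtain ⟨k, l, hk, hl, hbtw⟩ := exists_sbtw_of_six_touching hV (hr i)
    (fun k => him ▸ hmin _ (he k).1) (fun k => (dist_comm _ _).trans (he k).2.2)
    fun k l hkl => hsep (Subtype.coe_injective.ne (e.injective.ne hkl))
  have hfar' (k : Fin 6) (hk : r (e k) = r i) : dist (c (e k)) (c m) ≤ dist (c i) (c m) :=
    hfar _ (mem_filter.2 ⟨(he k).1, hk.trans him⟩)
  exact (hbtw.dist_lt_max_dist (c m)).not_ge (max_le (hfar' k hk) (hfar' l hl))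

theorem six_colours_theorem_for_discs_general (hV : finrank ℝ V = 2) (hr : ∀ i, 0 < r i)
    (hsep : Pairwise fun i j => r i + r j ≤ dist (c i) (c j)) :
    (contactGraph c r).Colorable 6 :=
  (contactGraph_isDegenerate hV hr hsep).colorable

end Discs

/-- Six colours theorem for discs: every finite family of pairwise non-overlapping closed
discs in the plane with positive radii admits a proper colouring with six colours. -/
theorem six_colours_theorem_for_discs (n : ℕ)
    (c : Fin n → EuclideanSpace ℝ (Fin 2)) (r : Fin n → ℝ)
    (hr : ∀ i, 0 < r i)
    (hsep : ∀ i j : Fin n, i ≠ j → r i + r j ≤ dist (c i) (c j)) :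
    ∃ f : Fin n → Fin 6,
      ∀ i j : Fin n, i ≠ j → dist (c i) (c j) = r i + r j → f i ≠ f j := by
  obtain ⟨f⟩ := six_colours_theorem_for_discs_general finrank_euclideanSpace_fin hr hsep
  exact ⟨f, fun i j hij htouch => f.valid ⟨hij, htouch⟩⟩
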